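/- arXiv:1504.03308 — 2 statements merged into one kernel-verified Lean document; each statement's English description precedes it below -/
import Mathlib

section
/- Smooth-function characterization of manifold-valued controlled rough paths: Let M be a d-dimensional C^∞ manifold without boundary, Hausdorff and second countable, let X = (x, 𝕏) be a weak-geometric p-rough path with control ω on [0,T], let y : [0,T] → M be continuous, and for each s ∈ [0,T] let y_s† : W → T_{y_s}M be a linear map. Then (y, y†) is a chart-controlled rough path if and only if for every smooth function f : M → ℝ, the pair (f ∘ y, s ↦ df_{y_s} ∘ y_s†) is an ℝ-valued rough path controlled by X on [0,T]. -/
noncomputable section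

open scoped BigOperators

/-- `ℝ^n` with the Euclidean norm. -/
abbrev Euc (n : ℕ) : Type := EuclideanSpace ℝ (Fin n)

/-- The `i`-th standard basis vector of `ℝ^n`. -/
def eb {n : ℕ} (i : Fin n) : Euc n := EuclideanSpace.single i 1

/-- Tensor product of two Euclidean vectors, realized in `ℝ^{n×m}` with the Euclidean norm. -/
def tensorE {n m : ℕ} (v : Euc n) (w : Euc m) : EuclideanSpace ℝ (Fin n × Fin m) :=
  (EuclideanSpace.equiv (Fin n × Fin m) ℝ).symm fun p => v p.1 * w p.2

/-- Application of the (unique) linear extension of a bilinear map `B` to a tensor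
`X ∈ ℝ^n ⊗ ℝ^m ≅ ℝ^{n × m}`. -/
def tapply {n m : ℕ} {V : Type*} [NormedAddCommGroup V] [NormedSpace ℝ V]
    (B : Euc n → Euc m → V) (X : EuclideanSpace ℝ (Fin n × Fin m)) : V :=
  ∑ q : Fin n × Fin m, X q • B (eb q.1) (eb q.2)
/-- `ω` is a control on the simplex `{(s,t) : 0 ≤ s ≤ t ≤ T}`. -/
structure IsControl (T : ℝ) (ω : ℝ → ℝ → ℝ) : Prop where
  cont : ContinuousOn (fun q : ℝ × ℝ => ω q.1 q.2)
    {q : ℝ × ℝ | 0 ≤ q.1 ∧ q.1 ≤ q.2 ∧ q.2 ≤ T}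
  nonneg : ∀ ⦃s t : ℝ⦄, 0 ≤ s → s ≤ t → t ≤ T → 0 ≤ ω s t
  zero : ∀ ⦃s : ℝ⦄, 0 ≤ s → s ≤ T → ω s s = 0
  superadditive : ∀ ⦃s t u : ℝ⦄, 0 ≤ s → s ≤ t → t ≤ u → u ≤ T → ω s t + ω t u ≤ ω s u
/-- `(x, XX)` is a `p`-rough path with control `ω` on `[0,T]`. -/
structure IsRoughPath (T p : ℝ) {k : ℕ} (ω : ℝ → ℝ → ℝ)
    (x : ℝ → Euc k) (XX : ℝ → ℝ → EuclideanSpace ℝ (Fin k × Fin k)) : Prop where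
  cont_x : ContinuousOn x (Set.Icc 0 T)
  cont_XX : ContinuousOn (fun q : ℝ × ℝ => XX q.1 q.2)
    {q : ℝ × ℝ | 0 ≤ q.1 ∧ q.1 ≤ q.2 ∧ q.2 ≤ T}
  chen : ∀ ⦃s t u : ℝ⦄, 0 ≤ s → s ≤ t → t ≤ u → u ≤ T →
    XX s u = XX s t + XX t u + tensorE (x t - x s) (x u - x t)
  bound_x : ∀ ⦃s t : ℝ⦄, 0 ≤ s → s ≤ t → t ≤ T → ‖x t - x s‖ ≤ ω s t ^ (1 / p)
  bound_XX : ∀ ⦃s t : ℝ⦄, 0 ≤ s → s ≤ t → t ≤ T → ‖XX s t‖ ≤ ω s t ^ (2 / p)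
/-- The rough path `(x, XX)` is weak-geometric: the symmetric part of `XX s t` is
`(1/2) x_{s,t} ⊗ x_{s,t}`. -/
def IsWeakGeometric (T : ℝ) {k : ℕ} (x : ℝ → Euc k)
    (XX : ℝ → ℝ → EuclideanSpace ℝ (Fin k × Fin k)) : Prop :=
  ∀ ⦃s t : ℝ⦄, 0 ≤ s → s ≤ t → t ≤ T → ∀ i j : Fin k,
    XX s t (i, j) + XX s t (j, i) = (x t - x s) i * (x t - x s) j
/-- `(y, y')` is a `V`-valued rough path controlled by `X = (x, ·)` (with control `ω`)
on the interval `[a, b]`. -/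
def IsCRP (p : ℝ) {k : ℕ} (ω : ℝ → ℝ → ℝ) (x : ℝ → Euc k)
    {V : Type*} [NormedAddCommGroup V] [NormedSpace ℝ V]
    (a b : ℝ) (y : ℝ → V) (y' : ℝ → Euc k →L[ℝ] V) : Prop :=
  ContinuousOn y (Set.Icc a b) ∧ ContinuousOn y' (Set.Icc a b) ∧
    ∃ C : ℝ, ∀ ⦃s t : ℝ⦄, a ≤ s → s ≤ t → t ≤ b →
      ‖y t - y s - y' s (x t - x s)‖ ≤ C * ω s t ^ (2 / p) ∧
      ‖y' t - y' s‖ ≤ C * ω s t ^ (1 / p)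

open scoped Manifold

/-- The differential `dφ_m : T_mM → ℝ^d` of a chart `φ`, with target read as `ℝ^d`
(recall `TangentSpace (𝓡 d) pt` is by definition `ℝ^d`). -/
def chartDeriv {d : ℕ} {M : Type*} [TopologicalSpace M] [ChartedSpace (Euc d) M]
    (φ : OpenPartialHomeomorph M (Euc d)) (m : M) :
    TangentSpace (𝓡 d) m →L[ℝ] Euc d :=
  mfderiv (𝓡 d) (𝓡 d) φ m

/-- The differential `df_m : T_mM → ℝ` of a real-valued function on `M`. -/
def realDeriv {d : ℕ} {M : Type*} [TopologicalSpace M] [ChartedSpace (Euc d) M]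
    (f : M → ℝ) (m : M) : TangentSpace (𝓡 d) m →L[ℝ] ℝ :=
  mfderiv (𝓡 d) 𝓘(ℝ, ℝ) f m

/-- `(y, y')` is a chart-controlled rough path in the manifold `M`, controlled by the rough
path with first level `x` and control `ω` on `[0,T]`: for every chart `φ` in the maximal
smooth atlas and every `[a,b] ⊆ [0,T]` with `y([a,b]) ⊆ D(φ)`, the chart read-out of
`(y, y')` satisfies the controlled-rough-path estimates. -/
def IsChartCRP (T p : ℝ) {k : ℕ} (ω : ℝ → ℝ → ℝ) (x : ℝ → Euc k)
    {d : ℕ} {M : Type*} [TopologicalSpace M] [ChartedSpace (Euc d) M]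
    [IsManifold (𝓡 d) (⊤ : ℕ∞) M]
    (y : ℝ → M) (y' : (s : ℝ) → Euc k →L[ℝ] TangentSpace (𝓡 d) (y s)) : Prop :=
  ∀ φ : OpenPartialHomeomorph M (Euc d),
    φ ∈ (contDiffGroupoid (⊤ : ℕ∞) (𝓡 d)).maximalAtlas M →
    ∀ a b : ℝ, 0 ≤ a → a ≤ b → b ≤ T → (∀ s ∈ Set.Icc a b, y s ∈ φ.source) →
    ∃ C : ℝ, ∀ ⦃s t : ℝ⦄, a ≤ s → s ≤ t → t ≤ b →
      ‖φ (y t) - φ (y s) - chartDeriv φ (y s) (y' s (x t - x s))‖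
        ≤ C * ω s t ^ (2 / p) ∧
      ‖(chartDeriv φ (y t)).comp (y' t) - (chartDeriv φ (y s)).comp (y' s)‖
        ≤ C * ω s t ^ (1 / p)

open Set Filter Topology

/-- The properties of `e s t = ω s t ^ (1 / p)` used in the estimates: it is nonnegative,
monotone under inclusion of intervals, and it dominates the increments of `x` on `[0, T]`. -/
structure IsGauge {W : Type*} [NormedAddCommGroup W] (T : ℝ) (x : ℝ → W)
    (e : ℝ → ℝ → ℝ) : Prop where
  nonneg : ∀ ⦃s t : ℝ⦄, 0 ≤ s → s ≤ t → t ≤ T → 0 ≤ e s t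
  mono : ∀ ⦃s s' t' t : ℝ⦄, 0 ≤ s → s ≤ s' → s' ≤ t' → t' ≤ t → t ≤ T → e s' t' ≤ e s t
  bound : ∀ ⦃s t : ℝ⦄, 0 ≤ s → s ≤ t → t ≤ T → ‖x t - x s‖ ≤ e s t

/-- The estimates in the definition of a controlled rough path, with a nonnegative constant and
in terms of a gauge. -/
def CRPEstimate {W V : Type*} [NormedAddCommGroup W] [NormedSpace ℝ W]
    [NormedAddCommGroup V] [NormedSpace ℝ V] (e : ℝ → ℝ → ℝ) (x : ℝ → W) (a b : ℝ)
    (z : ℝ → V) (z' : ℝ → W →L[ℝ] V) : Prop :=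
  ∃ C : ℝ, 0 ≤ C ∧ ∀ ⦃s t : ℝ⦄, a ≤ s → s ≤ t → t ≤ b →
    ‖z t - z s - z' s (x t - x s)‖ ≤ C * e s t ^ 2 ∧ ‖z' t - z' s‖ ≤ C * e s t

theorem rpow_two_div_eq_sq {r : ℝ} (hr : 0 ≤ r) (p : ℝ) : r ^ (2 / p) = (r ^ (1 / p)) ^ 2 := by
  rw [← Real.rpow_natCast, ← Real.rpow_mul hr]
  congr 1
  push_cast
  ring

theorem IsControl.mono {T : ℝ} {ω : ℝ → ℝ → ℝ} (hω : IsControl T ω) {s s' t' t : ℝ}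
    (h0 : 0 ≤ s) (h1 : s ≤ s') (h2 : s' ≤ t') (h3 : t' ≤ t) (h4 : t ≤ T) :
    ω s' t' ≤ ω s t := by
  have A := hω.superadditive h0 h1 (h2.trans h3) h4
  have B := hω.superadditive (h0.trans h1) h2 h3 h4
  have C := hω.nonneg h0 h1 (h2.trans (h3.trans h4))
  have D := hω.nonneg (h0.trans (h1.trans h2)) h3 h4
  linarith

theorem IsRoughPath.isGauge {T p : ℝ} (hp : 1 ≤ p) {k : ℕ} {ω : ℝ → ℝ → ℝ}
    (hω : IsControl T ω) {x : ℝ → Euc k} {XX : ℝ → ℝ → EuclideanSpace ℝ (Fin k × Fin k)}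
    (hX : IsRoughPath T p ω x XX) : IsGauge T x (fun s t => ω s t ^ (1 / p)) where
  nonneg _ _ h0 h1 h2 := Real.rpow_nonneg (hω.nonneg h0 h1 h2) _
  mono _ _ _ _ h0 h1 h2 h3 h4 :=
    Real.rpow_le_rpow (hω.nonneg (h0.trans h1) h2 (h3.trans h4)) (hω.mono h0 h1 h2 h3 h4)
      (by positivity)
  bound := hX.bound_x

theorem crpEstimate_iff {W V : Type*} [NormedAddCommGroup W] [NormedSpace ℝ W]
    [NormedAddCommGroup V] [NormedSpace ℝ V] {T p : ℝ} {ω : ℝ → ℝ → ℝ} (hω : IsControl T ω)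
    {x : ℝ → W} {a b : ℝ} (ha : 0 ≤ a) (hb : b ≤ T) {z : ℝ → V} {z' : ℝ → W →L[ℝ] V} :
    CRPEstimate (fun s t => ω s t ^ (1 / p)) x a b z z' ↔
      ∃ C : ℝ, ∀ ⦃s t : ℝ⦄, a ≤ s → s ≤ t → t ≤ b →
        ‖z t - z s - z' s (x t - x s)‖ ≤ C * ω s t ^ (2 / p) ∧
        ‖z' t - z' s‖ ≤ C * ω s t ^ (1 / p) := by
  constructor
  · rintro ⟨C, -, hC⟩
    refine ⟨C, fun s t h1 h2 h3 => ?_⟩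
    rw [rpow_two_div_eq_sq (hω.nonneg (ha.trans h1) h2 (h3.trans hb))]
    exact hC h1 h2 h3
  · rintro ⟨C, hC⟩
    refine ⟨max C 0, le_max_right _ _, fun s t h1 h2 h3 => ?_⟩
    have h0 := hω.nonneg (ha.trans h1) h2 (h3.trans hb)
    obtain ⟨A, B⟩ := hC h1 h2 h3
    rw [rpow_two_div_eq_sq h0] at A
    exact ⟨A.trans (by gcongr; exact le_max_left _ _), B.trans (by gcongr; exact le_max_left _ _)⟩

section Estimates

variable {W V U : Type*} [NormedAddCommGroup W] [NormedSpace ℝ W]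
  [NormedAddCommGroup V] [NormedSpace ℝ V] [NormedAddCommGroup U] [NormedSpace ℝ U]
  {T : ℝ} {x : ℝ → W} {e : ℝ → ℝ → ℝ} {a b c : ℝ} {z : ℝ → V} {z' : ℝ → W →L[ℝ] V}

theorem CRPEstimate.congr {w : ℝ → V} {w' : ℝ → W →L[ℝ] V} (h : CRPEstimate e x a b z z')
    (hw : ∀ s ∈ Icc a b, w s = z s) (hw' : ∀ s ∈ Icc a b, w' s = z' s) :
    CRPEstimate e x a b w w' := by
  obtain ⟨C, hC0, hC⟩ := h
  refine ⟨C, hC0, fun s t h1 h2 h3 => ?_⟩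
  have hs : s ∈ Icc a b := ⟨h1, h2.trans h3⟩
  have ht : t ∈ Icc a b := ⟨h1.trans h2, h3⟩
  rw [hw s hs, hw t ht, hw' s hs, hw' t ht]
  exact hC h1 h2 h3

theorem CRPEstimate.mono {a' b' : ℝ} (h : CRPEstimate e x a b z z') (ha : a ≤ a') (hb : b' ≤ b) :
    CRPEstimate e x a' b' z z' := by
  obtain ⟨C, hC0, hC⟩ := h
  exact ⟨C, hC0, fun s t h1 h2 h3 => hC (ha.trans h1) h2 (h3.trans hb)⟩

/-- Controlled rough path estimates on adjacent intervals can be concatenated. -/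
theorem CRPEstimate.union (he : IsGauge T x e) (ha : 0 ≤ a) (hc : c ≤ T)
    (h₁ : CRPEstimate e x a b z z') (h₂ : CRPEstimate e x b c z z') :
    CRPEstimate e x a c z z' := by
  obtain ⟨C, hC0, hC⟩ := h₁
  obtain ⟨D, hD0, hD⟩ := h₂
  refine ⟨2 * C + D, by positivity, fun s t h1 h2 h3 => ?_⟩
  have hs0 : 0 ≤ s := ha.trans h1
  have htT : t ≤ T := h3.trans hc
  have hst := he.nonneg hs0 h2 htT
  rcases le_total t b with htb | htb
  · obtain ⟨A, B⟩ := hC h1 h2 htb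
    exact ⟨A.trans (by gcongr; linarith), B.trans (by gcongr; linarith)⟩
  rcases le_total b s with hbs | hbs
  · obtain ⟨A, B⟩ := hD hbs h2 h3
    exact ⟨A.trans (by gcongr; linarith), B.trans (by gcongr; linarith)⟩
  obtain ⟨A₁, B₁⟩ := hC h1 hbs le_rfl
  obtain ⟨A₂, B₂⟩ := hD le_rfl htb h3
  have e₁ : e s b ≤ e s t := he.mono hs0 le_rfl hbs htb htT
  have e₂ : e b t ≤ e s t := he.mono hs0 hbs htb le_rfl htT
  have p₁ := he.nonneg hs0 hbs (htb.trans htT)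
  have p₂ := he.nonneg (hs0.trans hbs) htb htT
  have hx := he.bound (hs0.trans hbs) htb htT
  constructor
  · have hsplit : z t - z s - z' s (x t - x s) =
        (z t - z b - z' b (x t - x b)) + (z b - z s - z' s (x b - x s)) +
          (z' b - z' s) (x t - x b) := by
      simp only [map_sub, sub_apply]
      abel
    calc ‖z t - z s - z' s (x t - x s)‖
        ≤ ‖z t - z b - z' b (x t - x b)‖ + ‖z b - z s - z' s (x b - x s)‖ +
          ‖z' b - z' s‖ * ‖x t - x b‖ := by
          rw [hsplit]
          exact (norm_add₃_le).trans (by gcongr; exact ContinuousLinearMap.le_opNorm _ _)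
      _ ≤ D * e s t ^ 2 + C * e s t ^ 2 + (C * e s t) * e s t := by
          gcongr
          · exact A₂.trans (by gcongr)
          · exact A₁.trans (by gcongr)
          · exact B₁.trans (by gcongr)
          · exact hx.trans e₂
      _ = (2 * C + D) * e s t ^ 2 := by ring
  · calc ‖z' t - z' s‖ ≤ ‖z' t - z' b‖ + ‖z' b - z' s‖ := norm_sub_le_norm_sub_add_norm_sub ..
      _ ≤ D * e s t + C * e s t := by
          gcongr
          · exact B₂.trans (by gcongr)
          · exact B₁.trans (by gcongr)
      _ ≤ (2 * C + D) * e s t := by nlinarith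

/-- The controlled rough path estimates are preserved by a map which is differentiable with
bounded and Lipschitz derivative on a convex set containing the path. -/
theorem CRPEstimate.comp (he : IsGauge T x e) (ha : 0 ≤ a) (hb : b ≤ T)
    (h : CRPEstimate e x a b z z') {S : Set V} (hS : Convex ℝ S) (hz : ∀ s ∈ Icc a b, z s ∈ S)
    {F : V → U} (hF : ∀ v ∈ S, DifferentiableAt ℝ F v) {K : ℝ} (hK0 : 0 ≤ K)
    (hK : ∀ v ∈ S, ‖fderiv ℝ F v‖ ≤ K)
    (hL : ∀ v ∈ S, ∀ w ∈ S, ‖fderiv ℝ F v - fderiv ℝ F w‖ ≤ K * ‖v - w‖) :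
    CRPEstimate e x a b (fun s => F (z s)) (fun s => (fderiv ℝ F (z s)).comp (z' s)) := by
  rcases lt_or_ge b a with hab | hab
  · exact ⟨0, le_rfl, fun s t h1 h2 h3 => by linarith⟩
  obtain ⟨C, hC0, hC⟩ := h
  set E := e a b
  have hE0 : 0 ≤ E := he.nonneg ha hab hb
  set B := ‖z' a‖ + C * E
  have hB0 : 0 ≤ B := by positivity
  have hz'B : ∀ s ∈ Icc a b, ‖z' s‖ ≤ B := by
    intro s hs
    have h1 := (hC le_rfl hs.1 hs.2).2
    have h2 : e a s ≤ E := he.mono ha le_rfl hs.1 hs.2 hb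
    calc ‖z' s‖ ≤ ‖z' a‖ + ‖z' s - z' a‖ := norm_le_norm_add_norm_sub' _ _
      _ ≤ ‖z' a‖ + C * E := by gcongr; exact h1.trans (by gcongr)
  set L := C * E + B with hLdef
  have hL0 : 0 ≤ L := by positivity
  refine ⟨K * L ^ 2 + K * C + K * L * B, by positivity, fun s t h1 h2 h3 => ?_⟩
  have hs : s ∈ Icc a b := ⟨h1, h2.trans h3⟩
  have ht : t ∈ Icc a b := ⟨h1.trans h2, h3⟩
  have hst := he.nonneg (ha.trans h1) h2 (h3.trans hb)
  have hstE : e s t ≤ E := he.mono ha h1 h2 h3 hb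
  obtain ⟨A₁, A₂⟩ := hC h1 h2 h3
  have hx := he.bound (ha.trans h1) h2 (h3.trans hb)
  have hinc : ‖z t - z s‖ ≤ L * e s t := by
    calc ‖z t - z s‖ = ‖(z t - z s - z' s (x t - x s)) + z' s (x t - x s)‖ := by
          rw [sub_add_cancel]
      _ ≤ C * e s t ^ 2 + B * e s t := by
          refine (norm_add_le _ _).trans (add_le_add A₁ ?_)
          refine (ContinuousLinearMap.le_opNorm _ _).trans ?_
          gcongr
          exact hz'B s hs
      _ = (C * e s t + B) * e s t := by ring
      _ ≤ L * e s t := by rw [hLdef]; gcongr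
  have htaylor : ‖F (z t) - F (z s) - fderiv ℝ F (z s) (z t - z s)‖ ≤
      K * ‖z t - z s‖ * ‖z t - z s‖ := by
    have hseg : segment ℝ (z s) (z t) ⊆ S := hS.segment_subset (hz s hs) (hz t ht)
    refine Convex.norm_image_sub_le_of_norm_fderiv_le' (s := segment ℝ (z s) (z t))
      (fun v hv => hF v (hseg hv)) (fun v hv => ?_) (convex_segment _ _)
      (left_mem_segment ..) (right_mem_segment ..)
    refine (hL v (hseg hv) _ (hz s hs)).trans ?_
    gcongr
    simpa using norm_sub_le_of_mem_segment hv
  constructor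
  · calc ‖F (z t) - F (z s) - (fderiv ℝ F (z s)).comp (z' s) (x t - x s)‖
        = ‖(F (z t) - F (z s) - fderiv ℝ F (z s) (z t - z s)) +
            fderiv ℝ F (z s) (z t - z s - z' s (x t - x s))‖ := by
          congr 1
          rw [map_sub (fderiv ℝ F (z s)) (z t - z s), ContinuousLinearMap.comp_apply]
          abel
      _ ≤ K * (L * e s t) * (L * e s t) + K * (C * e s t ^ 2) := by
          refine (norm_add_le _ _).trans (add_le_add (htaylor.trans (by gcongr)) ?_)
          refine (ContinuousLinearMap.le_opNorm _ _).trans ?_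
          gcongr
          exact hK _ (hz s hs)
      _ = (K * L ^ 2 + K * C) * e s t ^ 2 := by ring
      _ ≤ _ := mul_le_mul_of_nonneg_right
          (le_add_of_nonneg_right (by positivity)) (by positivity)
  · calc ‖(fderiv ℝ F (z t)).comp (z' t) - (fderiv ℝ F (z s)).comp (z' s)‖
        = ‖(fderiv ℝ F (z t) - fderiv ℝ F (z s)).comp (z' t) +
            (fderiv ℝ F (z s)).comp (z' t - z' s)‖ := by
          congr 1
          ext w
          simp
      _ ≤ K * (L * e s t) * B + K * (C * e s t) := by
          refine (norm_add_le _ _).trans (add_le_add ?_ ?_)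
          · refine (ContinuousLinearMap.opNorm_comp_le _ _).trans ?_
            gcongr
            · exact (hL _ (hz t ht) _ (hz s hs)).trans (by gcongr)
            · exact hz'B t ht
          · refine (ContinuousLinearMap.opNorm_comp_le _ _).trans ?_
            gcongr
            exact hK _ (hz s hs)
      _ = (K * C + K * L * B) * e s t := by ring
      _ ≤ _ := by gcongr; linarith [show 0 ≤ K * L ^ 2 by positivity]

/-- Controlled rough path estimates in `ℝ^d` can be checked on coordinates. -/
theorem crpEstimate_of_coord {d : ℕ} (he : IsGauge T x e) (ha : 0 ≤ a) (hb : b ≤ T)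
    {z : ℝ → Euc d} {z' : ℝ → W →L[ℝ] Euc d}
    (h : ∀ i, CRPEstimate e x a b (fun s => z s i)
      (fun s => (EuclideanSpace.proj (𝕜 := ℝ) i : Euc d →L[ℝ] ℝ).comp (z' s))) :
    CRPEstimate e x a b z z' := by
  have hnorm : ∀ v : Euc d, ‖v‖ ≤ ∑ i, ‖v i‖ := by
    intro v
    calc ‖v‖ = ‖∑ i, EuclideanSpace.single i (v i)‖ := by
          congr 1
          ext j
          simp
      _ ≤ ∑ i, ‖v i‖ := (norm_sum_le _ _).trans (by simp)
  choose C hC0 hC using h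
  refine ⟨∑ i, C i, Finset.sum_nonneg fun i _ => hC0 i, fun s t h1 h2 h3 => ?_⟩
  have hst := he.nonneg (ha.trans h1) h2 (h3.trans hb)
  constructor
  · refine (hnorm _).trans ?_
    rw [Finset.sum_mul]
    exact Finset.sum_le_sum fun i _ => by simpa using (hC i h1 h2 h3).1
  · refine ContinuousLinearMap.opNorm_le_bound _
      (mul_nonneg (Finset.sum_nonneg fun i _ => hC0 i) hst) fun w => ?_
    refine (hnorm _).trans ?_
    rw [Finset.sum_mul, Finset.sum_mul]
    refine Finset.sum_le_sum fun i _ => ?_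
    have := ContinuousLinearMap.le_of_opNorm_le _ (hC i h1 h2 h3).2 w
    simpa using this

end Estimates

/-- The estimate on the derivative of a controlled rough path implies its continuity. -/
theorem continuousOn_of_le_control {T p : ℝ} (hp : 1 ≤ p) {ω : ℝ → ℝ → ℝ} (hω : IsControl T ω)
    {V : Type*} [NormedAddCommGroup V] {g : ℝ → V} {C : ℝ}
    (hg : ∀ ⦃s t : ℝ⦄, 0 ≤ s → s ≤ t → t ≤ T → ‖g t - g s‖ ≤ C * ω s t ^ (1 / p)) :
    ContinuousOn g (Icc 0 T) := by
  intro s hs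
  have hmaps : MapsTo (fun t : ℝ => (min s t, max s t)) (Icc 0 T)
      {q : ℝ × ℝ | 0 ≤ q.1 ∧ q.1 ≤ q.2 ∧ q.2 ≤ T} :=
    fun t ht => ⟨le_min hs.1 ht.1, min_le_max, max_le hs.2 ht.2⟩
  have hcont : ContinuousOn (fun t : ℝ => ω (min s t) (max s t)) (Icc 0 T) :=
    hω.cont.comp (by fun_prop : Continuous fun t : ℝ => (min s t, max s t)).continuousOn hmaps
  have hlim : Tendsto (fun t => C * ω (min s t) (max s t) ^ (1 / p)) (𝓝[Icc 0 T] s) (𝓝 0) := by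
    have h1 := ((hcont s hs).tendsto.rpow_const (p := 1 / p) (Or.inr (by positivity))).const_mul C
    simpa [hω.zero hs.1 hs.2, Real.zero_rpow (show p⁻¹ ≠ 0 by positivity)] using h1
  refine tendsto_iff_norm_sub_tendsto_zero.2
    (squeeze_zero' (Eventually.of_forall fun _ => norm_nonneg _) ?_ hlim)
  filter_upwards [self_mem_nhdsWithin] with t ht
  rcases le_total s t with h | h
  · simpa [h] using hg hs.1 h ht.2
  · rw [norm_sub_rev]
    simpa [h] using hg ht.1 h hs.2

/-- A `C^2` map has bounded and Lipschitz derivative on a small ball. -/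
theorem ContDiffAt.exists_ball_fderiv_bounds {V U : Type*} [NormedAddCommGroup V]
    [NormedSpace ℝ V] [NormedAddCommGroup U] [NormedSpace ℝ U] {F : V → U} {v₀ : V}
    (hF : ContDiffAt ℝ 2 F v₀) :
    ∃ r > 0, ∃ K : ℝ, 0 ≤ K ∧ (∀ v ∈ Metric.ball v₀ r, DifferentiableAt ℝ F v) ∧
      (∀ v ∈ Metric.ball v₀ r, ‖fderiv ℝ F v‖ ≤ K) ∧
      ∀ v ∈ Metric.ball v₀ r, ∀ w ∈ Metric.ball v₀ r,
        ‖fderiv ℝ F v - fderiv ℝ F w‖ ≤ K * ‖v - w‖ := by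
  have hD : ContDiffAt ℝ 1 (fderiv ℝ F) v₀ := hF.fderiv_right (by norm_num)
  obtain ⟨K, t, ht, hK⟩ := hD.exists_lipschitzOnWith
  have hdiff : ∀ᶠ v in 𝓝 v₀, DifferentiableAt ℝ F v :=
    (hF.eventually (by simp)).mono fun v hv => hv.differentiableAt (by simp)
  have hbd : ∀ᶠ v in 𝓝 v₀, ‖fderiv ℝ F v‖ < ‖fderiv ℝ F v₀‖ + 1 :=
    hD.continuousAt.norm.eventually_lt_const (lt_add_one _)
  obtain ⟨r, hr, hball⟩ := Metric.eventually_nhds_iff_ball.1 (hdiff.and (hbd.and ht))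
  refine ⟨r, hr, max K (‖fderiv ℝ F v₀‖ + 1), K.2.trans (le_max_left _ _),
    fun v hv => (hball v hv).1, fun v hv => (hball v hv).2.1.le.trans (le_max_right _ _),
    fun v hv w hw => ?_⟩
  refine (hK.norm_sub_le (hball v hv).2.2 (hball w hw).2.2).trans ?_
  gcongr
  exact le_max_left _ _

section Manifold

variable {d : ℕ} {M : Type*} [TopologicalSpace M] [ChartedSpace (Euc d) M]
  {φ : OpenPartialHomeomorph M (Euc d)} {m : M}

/-- A function on `M` read in a smooth chart is smooth. -/
theorem contDiffAt_comp_chart_symm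
    (hφ : φ ∈ (contDiffGroupoid (⊤ : ℕ∞) (𝓡 d)).maximalAtlas M) {f : M → ℝ}
    (hf : ContMDiff (𝓡 d) 𝓘(ℝ, ℝ) (⊤ : ℕ∞) f) {v : Euc d} (hv : v ∈ φ.target) :
    ContDiffAt ℝ (⊤ : ℕ∞) (f ∘ φ.symm) v := by
  have h := contMDiffOn_symm_of_mem_maximalAtlas hφ
  exact (hf.contMDiffAt.comp v (h.contMDiffAt (φ.open_target.mem_nhds hv))).contDiffAt

/-- Chain rule for a function which factors locally through a chart. -/
theorem realDeriv_eq_fderiv_comp_chartDeriv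
    (hφ : φ ∈ (contDiffGroupoid (⊤ : ℕ∞) (𝓡 d)).maximalAtlas M) (hm : m ∈ φ.source)
    {f : M → ℝ} {F : Euc d → ℝ} (hF : DifferentiableAt ℝ F (φ m)) (hfF : f =ᶠ[𝓝 m] F ∘ φ) :
    realDeriv f m = (fderiv ℝ F (φ m)).comp (chartDeriv φ m) := by
  have hφd : MDifferentiableAt (𝓡 d) (𝓡 d) φ m :=
    (contMDiffAt_of_mem_maximalAtlas hφ hm).mdifferentiableAt (by simp)
  unfold realDeriv chartDeriv
  rw [hfF.mfderiv_eq]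
  exact (mfderiv_comp m hF.mdifferentiableAt hφd).trans (by rw [mfderiv_eq_fderiv]; rfl)

/-- A smooth function on an open set agrees near a given compact set with a globally
smooth function. -/
theorem exists_contMDiff_eventuallyEq_of_isCompact
    [IsManifold (𝓡 d) (⊤ : ℕ∞) M] [T2Space M] [SecondCountableTopology M]
    {K O : Set M} (hK : IsCompact K) (hO : IsOpen O) (hKO : K ⊆ O) {g : M → ℝ}
    (hg : ContMDiffOn (𝓡 d) 𝓘(ℝ, ℝ) (⊤ : ℕ∞) g O) :
    ∃ f : M → ℝ, ContMDiff (𝓡 d) 𝓘(ℝ, ℝ) (⊤ : ℕ∞) f ∧ ∀ m ∈ K, f =ᶠ[𝓝 m] g := by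
  have : LocallyCompactSpace M := ChartedSpace.locallyCompactSpace (Euc d) M
  obtain ⟨L, hL, hKL, hLO⟩ := exists_compact_between hK hO hKO
  obtain ⟨χ, hχ1, hχ0, -⟩ := exists_contMDiffMap_one_nhds_of_subset_interior (𝓡 d)
    (n := (⊤ : ℕ∞)) hK.isClosed hKL
  refine ⟨fun m => χ m * g m, contMDiff_of_tsupport fun m hm => ?_, fun m hm => ?_⟩
  · have hmL : m ∈ L := by
      refine closure_minimal (fun q hq => ?_) hL.isClosed hm
      by_contra hqL
      exact hq (by simp [hχ0 q hqL])
    exact χ.contMDiff.contMDiffAt.mul (hg.contMDiffAt (hO.mem_nhds (hLO hmL)))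
  · filter_upwards [eventually_nhdsSet_iff_forall.1 hχ1 m hm] with q hq
    simp [hq]

/-- Near each point of `M`, the controlled rough path estimates in charts imply those of the
push-forward under a smooth function. -/
theorem IsChartCRP.exists_nhds_crpEstimate [IsManifold (𝓡 d) (⊤ : ℕ∞) M]
    {T p : ℝ} {k : ℕ} {ω : ℝ → ℝ → ℝ} (hω : IsControl T ω) {x : ℝ → Euc k}
    (he : IsGauge T x (fun s t => ω s t ^ (1 / p))) {y : ℝ → M}
    {y' : (s : ℝ) → Euc k →L[ℝ] TangentSpace (𝓡 d) (y s)} (h : IsChartCRP T p ω x y y')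
    {f : M → ℝ} (hf : ContMDiff (𝓡 d) 𝓘(ℝ, ℝ) (⊤ : ℕ∞) f) (m : M) :
    ∃ O : Set M, IsOpen O ∧ m ∈ O ∧ ∀ a b : ℝ, 0 ≤ a → a ≤ b → b ≤ T →
      (∀ s ∈ Icc a b, y s ∈ O) →
      CRPEstimate (fun s t => ω s t ^ (1 / p)) x a b (fun s => f (y s))
        (fun s => (realDeriv f (y s)).comp (y' s)) := by
  set φ := chartAt (Euc d) m
  have hm : m ∈ φ.source := mem_chart_source _ _
  have hφ : φ ∈ (contDiffGroupoid (⊤ : ℕ∞) (𝓡 d)).maximalAtlas M :=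
    IsManifold.chart_mem_maximalAtlas m
  have hF := contDiffAt_comp_chart_symm hφ hf (φ.map_source hm)
  obtain ⟨r, hr, K, hK0, hdiff, hK, hL⟩ :=
    (hF.of_le (WithTop.coe_le_coe.2 (le_top : (2 : ℕ∞) ≤ ⊤))).exists_ball_fderiv_bounds
  refine ⟨φ.source ∩ φ ⁻¹' Metric.ball (φ m) r, φ.isOpen_inter_preimage Metric.isOpen_ball,
    ⟨hm, Metric.mem_ball_self hr⟩, fun a b ha hab hb hys => ?_⟩
  have hz := (crpEstimate_iff hω ha hb (z := fun s => φ (y s))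
    (z' := fun s => (chartDeriv φ (y s)).comp (y' s))).2
      (h φ hφ a b ha hab hb fun s hs => (hys s hs).1)
  refine (hz.comp he ha hb (convex_ball (φ m) r) (fun s hs => (hys s hs).2) hdiff hK0 hK
    hL).congr (fun s hs => ?_) (fun s hs => ?_)
  · simp [φ.left_inv (hys s hs).1]
  · rw [realDeriv_eq_fderiv_comp_chartDeriv hφ (hys s hs).1 (hdiff _ (hys s hs).2)]
    · rfl
    · filter_upwards [φ.open_source.mem_nhds (hys s hs).1] with q hq
      simp [φ.left_inv hq]

/-- The push-forward of a chart-controlled rough path under a smooth function satisfies the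
controlled rough path estimates on the whole interval. -/
theorem IsChartCRP.crpEstimate [IsManifold (𝓡 d) (⊤ : ℕ∞) M]
    {T p : ℝ} (hT : 0 < T) {k : ℕ} {ω : ℝ → ℝ → ℝ} (hω : IsControl T ω) {x : ℝ → Euc k}
    (he : IsGauge T x (fun s t => ω s t ^ (1 / p))) {y : ℝ → M}
    (hy : ContinuousOn y (Icc 0 T))
    {y' : (s : ℝ) → Euc k →L[ℝ] TangentSpace (𝓡 d) (y s)} (h : IsChartCRP T p ω x y y')
    {f : M → ℝ} (hf : ContMDiff (𝓡 d) 𝓘(ℝ, ℝ) (⊤ : ℕ∞) f) :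
    CRPEstimate (fun s t => ω s t ^ (1 / p)) x 0 T (fun s => f (y s))
      (fun s => (realDeriv f (y s)).comp (y' s)) := by
  choose O hO hmO hloc using h.exists_nhds_crpEstimate hω he hf
  obtain ⟨τ, hτ0, hτ, ⟨N, hN⟩, hcov⟩ := exists_monotone_Icc_subset_open_cover_Icc hT.le
    (c := fun m => (Icc 0 T).domRestrict y ⁻¹' O m)
    (fun m => (hO m).preimage hy.domRestrict) (fun s _ => mem_iUnion.2 ⟨y s, hmO _⟩)
  have key : ∀ n, CRPEstimate (fun s t => ω s t ^ (1 / p)) x 0 (τ n) (fun s => f (y s))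
      (fun s => (realDeriv f (y s)).comp (y' s)) := by
    have step : ∀ n, CRPEstimate (fun s t => ω s t ^ (1 / p)) x (τ n) (τ (n + 1))
        (fun s => f (y s)) (fun s => (realDeriv f (y s)).comp (y' s)) := by
      intro n
      obtain ⟨m, hsub⟩ := hcov n
      refine hloc m _ _ (τ n).2.1 (hτ n.le_succ) (τ (n + 1)).2.2 fun s hs => ?_
      exact @hsub ⟨s, (τ n).2.1.trans hs.1, hs.2.trans (τ (n + 1)).2.2⟩ hs
    intro n
    induction n with
    | zero =>
      have hle : (τ 0 : ℝ) ≤ τ 1 := hτ zero_le_one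
      exact (step 0).mono hτ0.le hle
    | succ n ih => exact ih.union he le_rfl (τ (n + 1)).2.2 (step n)
  have hfin := key N
  rwa [hN N le_rfl] at hfin

/-- If all smooth push-forwards satisfy the controlled rough path estimates, then so does the
path read in a chart. -/
theorem isChartCRP_of_forall_crpEstimate [IsManifold (𝓡 d) (⊤ : ℕ∞) M]
    [T2Space M] [SecondCountableTopology M]
    {T p : ℝ} {k : ℕ} {ω : ℝ → ℝ → ℝ} (hω : IsControl T ω) {x : ℝ → Euc k}
    (he : IsGauge T x (fun s t => ω s t ^ (1 / p))) {y : ℝ → M}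
    (hy : ContinuousOn y (Icc 0 T))
    {y' : (s : ℝ) → Euc k →L[ℝ] TangentSpace (𝓡 d) (y s)}
    (h : ∀ f : M → ℝ, ContMDiff (𝓡 d) 𝓘(ℝ, ℝ) (⊤ : ℕ∞) f →
      CRPEstimate (fun s t => ω s t ^ (1 / p)) x 0 T (fun s => f (y s))
        (fun s => (realDeriv f (y s)).comp (y' s))) :
    IsChartCRP T p ω x y y' := by
  intro φ hφ a b ha hab hb hys
  refine (crpEstimate_iff hω ha hb (z := fun s => φ (y s))
    (z' := fun s => (chartDeriv φ (y s)).comp (y' s))).1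
      (crpEstimate_of_coord he ha hb fun i => ?_)
  set P : Euc d →L[ℝ] ℝ := EuclideanSpace.proj (𝕜 := ℝ) i
  have hg : ContMDiffOn (𝓡 d) 𝓘(ℝ, ℝ) (⊤ : ℕ∞) (P ∘ φ) φ.source :=
    P.contMDiff.comp_contMDiffOn (contMDiffOn_of_mem_maximalAtlas hφ)
  obtain ⟨f, hf, hfg⟩ := exists_contMDiff_eventuallyEq_of_isCompact
    (isCompact_Icc.image_of_continuousOn (hy.mono (Icc_subset_Icc ha hb))) φ.open_source
    (image_subset_iff.2 hys) hg
  refine ((h f hf).mono ha hb).congr (fun s hs => ?_) (fun s hs => ?_)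
  · exact (hfg _ (mem_image_of_mem y hs)).self_of_nhds.symm
  · rw [realDeriv_eq_fderiv_comp_chartDeriv hφ (hys s hs) P.differentiableAt
      (hfg _ (mem_image_of_mem y hs)), P.fderiv]
    rfl

end Manifold

/-- **Smooth-function characterization of manifold-valued controlled rough paths.**
`(y, y')` is a chart-controlled rough path if and only if for every smooth `f : M → ℝ` the
push-forward `(f ∘ y, df ∘ y')` is an `ℝ`-valued rough path controlled by `X`. -/
theorem isChartCRP_iff_forall_smooth_pushforward_CRP
    {T p : ℝ} (hT : 0 < T) (hp1 : 1 ≤ p) (hp3 : p < 3) {k : ℕ} (hk : 1 ≤ k)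
    {ω : ℝ → ℝ → ℝ} (hω : IsControl T ω)
    {x : ℝ → Euc k} {XX : ℝ → ℝ → EuclideanSpace ℝ (Fin k × Fin k)}
    (hX : IsRoughPath T p ω x XX) (hgeo : IsWeakGeometric T x XX)
    {d : ℕ} {M : Type*} [TopologicalSpace M] [ChartedSpace (Euc d) M]
    [IsManifold (𝓡 d) (⊤ : ℕ∞) M] [T2Space M] [SecondCountableTopology M]
    {y : ℝ → M} (hy : ContinuousOn y (Set.Icc 0 T))
    (y' : (s : ℝ) → Euc k →L[ℝ] TangentSpace (𝓡 d) (y s)) :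
    IsChartCRP T p ω x y y' ↔
      ∀ f : M → ℝ, ContMDiff (𝓡 d) 𝓘(ℝ, ℝ) (⊤ : ℕ∞) f →
        IsCRP p ω x 0 T (fun s => f (y s))
          (fun s => (realDeriv f (y s)).comp (y' s)) := by
  have he := hX.isGauge hp1 hω
  constructor
  · intro h f hf
    obtain ⟨C, hC⟩ := (crpEstimate_iff hω le_rfl le_rfl).1 (h.crpEstimate hT hω he hy hf)
    exact ⟨hf.continuous.comp_continuousOn hy,
      continuousOn_of_le_control hp1 hω fun s t h1 h2 h3 => (hC h1 h2 h3).2, C, hC⟩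
  · exact fun h => isChartCRP_of_forall_crpEstimate hω he hy fun f hf =>
      (crpEstimate_iff hω le_rfl le_rfl).2 (h f hf).2.2
end
end

section
/- Push-forwards of controlled rough paths are controlled rough paths: Let M be a d-dimensional and M̃ a d̃-dimensional C^∞ manifold (both without boundary, Hausdorff, second countable), let f : M → M̃ be a smooth map, let X = (x, 𝕏) be a weak-geometric p-rough path with control ω on [0,T], and let (y, y†) be a chart-controlled rough path in M controlled by X. Then the pair (f ∘ y, s ↦ f_{* y_s} ∘ y_s†), where f_{* y_s} : T_{y_s}M → T_{f(y_s)}M̃ is the differential of f at y_s, is a chart-controlled rough path in M̃ controlled by X. -/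
noncomputable section

open scoped BigOperators

open scoped Manifold

/-- `ρ` is a nonnegative interval function on `[a,b]`, monotone under inclusion of intervals,
that bounds the increments of `x`. -/
structure IsIncrementBound {V : Type*} [NormedAddCommGroup V] (ρ : ℝ → ℝ → ℝ) (x : ℝ → V)
    (a b : ℝ) : Prop where
  nonneg : ∀ ⦃s t : ℝ⦄, a ≤ s → s ≤ t → t ≤ b → 0 ≤ ρ s t
  mono : ∀ ⦃s s' t' t : ℝ⦄, a ≤ s → s ≤ s' → s' ≤ t' → t' ≤ t → t ≤ b → ρ s' t' ≤ ρ s t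
  bound : ∀ ⦃s t : ℝ⦄, a ≤ s → s ≤ t → t ≤ b → ‖x t - x s‖ ≤ ρ s t

theorem IsIncrementBound.subinterval {V : Type*} [NormedAddCommGroup V] {ρ : ℝ → ℝ → ℝ}
    {x : ℝ → V} {a b a' b' : ℝ} (h : IsIncrementBound ρ x a b) (ha : a ≤ a') (hb : b' ≤ b) :
    IsIncrementBound ρ x a' b' where
  nonneg _ _ h₁ h₂ h₃ := h.nonneg (ha.trans h₁) h₂ (h₃.trans hb)
  mono _ _ _ _ h₁ h₂ h₃ h₄ h₅ := h.mono (ha.trans h₁) h₂ h₃ h₄ (h₅.trans hb)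
  bound _ _ h₁ h₂ h₃ := h.bound (ha.trans h₁) h₂ (h₃.trans hb)

/-- `(z, Z)` is a vector-valued path controlled by `x` on `[a,b]`, with increments measured
by `ρ`. -/
def IsControlledOn {V E : Type*} [NormedAddCommGroup V] [NormedSpace ℝ V]
    [NormedAddCommGroup E] [NormedSpace ℝ E] (ρ : ℝ → ℝ → ℝ) (x : ℝ → V) (a b : ℝ)
    (z : ℝ → E) (Z : ℝ → V →L[ℝ] E) : Prop :=
  ∃ C : ℝ, 0 ≤ C ∧ ∀ ⦃s t : ℝ⦄, a ≤ s → s ≤ t → t ≤ b →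
    ‖z t - z s - Z s (x t - x s)‖ ≤ C * ρ s t ^ 2 ∧ ‖Z t - Z s‖ ≤ C * ρ s t

section Controlled

variable {V E F : Type*} [NormedAddCommGroup V] [NormedSpace ℝ V]
  [NormedAddCommGroup E] [NormedSpace ℝ E] [NormedAddCommGroup F] [NormedSpace ℝ F]
  {ρ : ℝ → ℝ → ℝ} {x : ℝ → V} {a b : ℝ}

theorem IsControlledOn.congr {z z' : ℝ → E} {Z Z' : ℝ → V →L[ℝ] E}
    (h : IsControlledOn ρ x a b z Z) (hz : ∀ s ∈ Set.Icc a b, z' s = z s)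
    (hZ : ∀ s ∈ Set.Icc a b, Z' s = Z s) : IsControlledOn ρ x a b z' Z' := by
  obtain ⟨C, hC, h⟩ := h
  refine ⟨C, hC, fun s t hs hst ht => ?_⟩
  rw [hz s ⟨hs, hst.trans ht⟩, hz t ⟨hs.trans hst, ht⟩, hZ s ⟨hs, hst.trans ht⟩,
    hZ t ⟨hs.trans hst, ht⟩]
  exact h hs hst ht

theorem IsControlledOn.concat {m : ℝ} {z : ℝ → E} {Z : ℝ → V →L[ℝ] E}
    (hρ : IsIncrementBound ρ x a b) (ham : a ≤ m) (hmb : m ≤ b)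
    (h₁ : IsControlledOn ρ x a m z Z) (h₂ : IsControlledOn ρ x m b z Z) :
    IsControlledOn ρ x a b z Z := by
  obtain ⟨C, hC, h₁⟩ := h₁
  obtain ⟨D, hD, h₂⟩ := h₂
  refine ⟨2 * C + D, by positivity, fun s t hs hst ht => ?_⟩
  have hr := hρ.nonneg hs hst ht
  rcases le_total t m with htm | hmt
  · obtain ⟨e₁, e₂⟩ := h₁ hs hst htm
    exact ⟨e₁.trans (by gcongr; linarith), e₂.trans (by gcongr; linarith)⟩
  rcases le_total m s with hms | hsm
  · obtain ⟨e₁, e₂⟩ := h₂ hms hst ht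
    exact ⟨e₁.trans (by gcongr; linarith), e₂.trans (by gcongr; linarith)⟩
  obtain ⟨e₁, e₂⟩ := h₁ hs hsm le_rfl
  obtain ⟨f₁, f₂⟩ := h₂ le_rfl hmt ht
  have hl0 := hρ.nonneg hs hsm hmb
  have hr0 := hρ.nonneg ham hmt ht
  have hl : ρ s m ≤ ρ s t := hρ.mono hs le_rfl hsm hmt ht
  have hr' : ρ m t ≤ ρ s t := hρ.mono hs hsm hmt le_rfl ht
  have hx := hρ.bound ham hmt ht
  constructor
  · have key : z t - z s - Z s (x t - x s) = (z t - z m - Z m (x t - x m)) +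
        (z m - z s - Z s (x m - x s)) + (Z m - Z s) (x t - x m) := by
      simp only [map_sub, sub_apply]
      abel
    calc ‖z t - z s - Z s (x t - x s)‖
        ≤ ‖z t - z m - Z m (x t - x m)‖ + ‖z m - z s - Z s (x m - x s)‖
          + ‖(Z m - Z s) (x t - x m)‖ := by rw [key]; exact norm_add₃_le
      _ ≤ D * ρ m t ^ 2 + C * ρ s m ^ 2 + (C * ρ s m) * ρ m t := by
          gcongr
          exact (ContinuousLinearMap.le_opNorm _ _).trans (by gcongr)
      _ ≤ D * ρ s t ^ 2 + C * ρ s t ^ 2 + (C * ρ s t) * ρ s t := by gcongr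
      _ = (2 * C + D) * ρ s t ^ 2 := by ring
  · calc ‖Z t - Z s‖ ≤ ‖Z t - Z m‖ + ‖Z m - Z s‖ := norm_sub_le_norm_sub_add_norm_sub _ _ _
      _ ≤ D * ρ s t + C * ρ s t := by
          refine add_le_add (f₂.trans ?_) (e₂.trans ?_) <;> gcongr
      _ ≤ (2 * C + D) * ρ s t := by nlinarith [mul_nonneg hC hr]

/-- Being controlled is a local property in time. -/
theorem isControlledOn_of_locally {z : ℝ → E} {Z : ℝ → V →L[ℝ] E}
    (hρ : IsIncrementBound ρ x a b) (hab : a ≤ b)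
    (h : ∀ s : Set.Icc a b, ∃ U : Set (Set.Icc a b), IsOpen U ∧ s ∈ U ∧
      ∀ u v : Set.Icc a b, u ≤ v → Set.Icc u v ⊆ U → IsControlledOn ρ x u v z Z) :
    IsControlledOn ρ x a b z Z := by
  choose U hU hmem hloc using h
  obtain ⟨τ, hτ0, hτ, ⟨n, hn⟩, hsub⟩ := exists_monotone_Icc_subset_open_cover_Icc hab hU
    (fun s _ => Set.mem_iUnion.2 ⟨s, hmem s⟩)
  have piece : ∀ j, IsControlledOn ρ x (τ j) (τ (j + 1)) z Z := fun j => by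
    obtain ⟨i, hi⟩ := hsub j
    exact hloc i _ _ (hτ j.le_succ) hi
  have initial : ∀ j, IsControlledOn ρ x a (τ (j + 1)) z Z := by
    intro j
    induction j with
    | zero => simpa only [hτ0] using piece 0
    | succ j ih =>
      exact ih.concat (hρ.subinterval le_rfl (τ (j + 2)).2.2) (τ (j + 1)).2.1
        (hτ (j + 1).le_succ) (piece (j + 1))
  simpa only [hn (n + 1) n.le_succ] using initial n

/-- A `C^{1,1}` function on a convex set maps controlled paths to controlled paths. -/
theorem IsControlledOn.comp_of_lipschitz_deriv {z : ℝ → E} {Z : ℝ → V →L[ℝ] E}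
    (hρ : IsIncrementBound ρ x a b) (hab : a ≤ b) (hz : IsControlledOn ρ x a b z Z)
    {B : Set E} (hB : Convex ℝ B) (hzB : ∀ s ∈ Set.Icc a b, z s ∈ B)
    {G : E → F} {G' : E → E →L[ℝ] F} (hG : ∀ v ∈ B, HasFDerivAt G (G' v) v)
    {K : NNReal} (hK : LipschitzOnWith K G' B) :
    IsControlledOn ρ x a b (fun s => G (z s)) (fun s => (G' (z s)).comp (Z s)) := by
  obtain ⟨C, hC, h⟩ := hz
  set R := ρ a b with hR
  have hR0 : 0 ≤ R := hρ.nonneg le_rfl hab le_rfl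
  set A := ‖Z a‖ + C * R with hA
  have hA0 : 0 ≤ A := by positivity
  have hZ : ∀ s ∈ Set.Icc a b, ‖Z s‖ ≤ A := fun s hs => by
    have h₁ := (h le_rfl hs.1 hs.2).2
    have h₂ : ρ a s ≤ R := hρ.mono le_rfl le_rfl hs.1 hs.2 le_rfl
    calc ‖Z s‖ ≤ ‖Z a‖ + ‖Z s - Z a‖ := norm_le_norm_add_norm_sub' _ _
      _ ≤ A := by rw [hA]; gcongr; exact h₁.trans (by gcongr)
  set L := A + C * R with hL
  have hL0 : 0 ≤ L := by positivity
  have hinc : ∀ ⦃s t : ℝ⦄, a ≤ s → s ≤ t → t ≤ b → ‖z t - z s‖ ≤ L * ρ s t := by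
    intro s t hs hst ht
    have h₀ := hρ.nonneg hs hst ht
    have h₂ : ρ s t ≤ R := hρ.mono le_rfl hs hst ht le_rfl
    calc ‖z t - z s‖ ≤ ‖Z s (x t - x s)‖ + ‖z t - z s - Z s (x t - x s)‖ :=
          norm_le_norm_add_norm_sub' _ _
      _ ≤ A * ρ s t + C * (R * ρ s t) := by
          refine add_le_add ((ContinuousLinearMap.le_opNorm _ _).trans ?_)
            ((h hs hst ht).1.trans ?_)
          · exact mul_le_mul (hZ s ⟨hs, hst.trans ht⟩) (hρ.bound hs hst ht) (norm_nonneg _) hA0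
          · rw [sq]; gcongr
      _ = L * ρ s t := by rw [hL]; ring
  have hGlip : ∀ ⦃s t : ℝ⦄, a ≤ s → s ≤ t → t ≤ b → ‖G' (z t) - G' (z s)‖ ≤ K * (L * ρ s t) := by
    intro s t hs hst ht
    exact (hK.norm_sub_le (hzB t ⟨hs.trans hst, ht⟩) (hzB s ⟨hs, hst.trans ht⟩)).trans
      (by gcongr; exact hinc hs hst ht)
  set N := ‖G' (z a)‖ + K * (L * R) with hN
  have hN0 : 0 ≤ N := by positivity
  have hG'N : ∀ s ∈ Set.Icc a b, ‖G' (z s)‖ ≤ N := fun s hs => by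
    have h₁ := hGlip le_rfl hs.1 hs.2
    have h₂ : ρ a s ≤ R := hρ.mono le_rfl le_rfl hs.1 hs.2 le_rfl
    calc ‖G' (z s)‖ ≤ ‖G' (z a)‖ + ‖G' (z s) - G' (z a)‖ := norm_le_norm_add_norm_sub' _ _
      _ ≤ N := by rw [hN]; gcongr; exact h₁.trans (by gcongr)
  have taylor : ∀ v ∈ B, ∀ w ∈ B, ‖G w - G v - G' v (w - v)‖ ≤ K * ‖w - v‖ * ‖w - v‖ := by
    intro v hv w hw
    have hseg : segment ℝ v w ⊆ B := hB.segment_subset hv hw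
    refine (convex_segment v w).norm_image_sub_le_of_norm_hasFDerivWithin_le'
      (fun u hu => (hG u (hseg hu)).hasFDerivWithinAt) (fun u hu => ?_)
      (left_mem_segment ℝ v w) (right_mem_segment ℝ v w)
    refine (hK.norm_sub_le (hseg hu) hv).trans ?_
    gcongr
    exact norm_sub_le_of_mem_segment hu
  refine ⟨K * L ^ 2 + N * C + K * L * A, by positivity, fun s t hs hst ht => ?_⟩
  have hsI : s ∈ Set.Icc a b := ⟨hs, hst.trans ht⟩
  have htI : t ∈ Set.Icc a b := ⟨hs.trans hst, ht⟩
  have h₀ := hρ.nonneg hs hst ht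
  obtain ⟨h₁, h₂⟩ := h hs hst ht
  constructor
  · have key : G (z t) - G (z s) - ((G' (z s)).comp (Z s)) (x t - x s) =
        (G (z t) - G (z s) - G' (z s) (z t - z s)) +
          G' (z s) (z t - z s - Z s (x t - x s)) := by
      simp only [map_sub, ContinuousLinearMap.comp_apply]
      abel
    calc ‖G (z t) - G (z s) - ((G' (z s)).comp (Z s)) (x t - x s)‖
        ≤ K * ‖z t - z s‖ * ‖z t - z s‖ + N * (C * ρ s t ^ 2) := by
          rw [key]
          refine (norm_add_le _ _).trans (add_le_add (taylor _ (hzB s hsI) _ (hzB t htI)) ?_)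
          exact (ContinuousLinearMap.le_opNorm _ _).trans
            (mul_le_mul (hG'N s hsI) h₁ (norm_nonneg _) hN0)
      _ ≤ K * (L * ρ s t) * (L * ρ s t) + N * (C * ρ s t ^ 2) := by
          have := hinc hs hst ht
          gcongr
      _ = (K * L ^ 2 + N * C) * ρ s t ^ 2 := by ring
      _ ≤ (K * L ^ 2 + N * C + K * L * A) * ρ s t ^ 2 := by
          exact mul_le_mul_of_nonneg_right (le_add_of_nonneg_right (by positivity)) (by positivity)
  · have key : (G' (z t)).comp (Z t) - (G' (z s)).comp (Z s) =
        (G' (z t)).comp (Z t - Z s) + (G' (z t) - G' (z s)).comp (Z s) := by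
      rw [ContinuousLinearMap.comp_sub, ContinuousLinearMap.sub_comp]
      abel
    calc ‖(G' (z t)).comp (Z t) - (G' (z s)).comp (Z s)‖
        ≤ N * (C * ρ s t) + K * (L * ρ s t) * A := by
          rw [key]
          refine (norm_add_le _ _).trans (add_le_add ?_ ?_)
          · exact (ContinuousLinearMap.opNorm_comp_le _ _).trans
              (mul_le_mul (hG'N t htI) h₂ (norm_nonneg _) hN0)
          · exact (ContinuousLinearMap.opNorm_comp_le _ _).trans
              (mul_le_mul (hGlip hs hst ht) (hZ s hsI) (norm_nonneg _) (by positivity))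
      _ = (N * C + K * L * A) * ρ s t := by ring
      _ ≤ (K * L ^ 2 + N * C + K * L * A) * ρ s t := by
          rw [add_assoc (K * L ^ 2)]
          exact mul_le_mul_of_nonneg_right (le_add_of_nonneg_left (by positivity)) h₀

end Controlled

theorem IsRoughPath.isIncrementBound {T p : ℝ} (hp : 0 ≤ p) {k : ℕ} {ω : ℝ → ℝ → ℝ}
    (hω : IsControl T ω) {x : ℝ → Euc k} {XX : ℝ → ℝ → EuclideanSpace ℝ (Fin k × Fin k)}
    (hX : IsRoughPath T p ω x XX) :
    IsIncrementBound (fun s t => ω s t ^ (1 / p)) x 0 T where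
  nonneg _ _ hs hst ht := Real.rpow_nonneg (hω.nonneg hs hst ht) _
  mono s s' t' t h₁ h₂ h₃ h₄ h₅ := by
    refine Real.rpow_le_rpow (hω.nonneg (h₁.trans h₂) h₃ (h₄.trans h₅)) ?_ (by positivity)
    have e₁ := hω.superadditive h₁ h₂ (h₃.trans h₄) h₅
    have e₂ := hω.superadditive (h₁.trans h₂) h₃ h₄ h₅
    have e₃ := hω.nonneg h₁ h₂ (h₃.trans (h₄.trans h₅))
    have e₄ := hω.nonneg (h₁.trans (h₂.trans h₃)) h₄ h₅
    linarith
  bound := hX.bound_x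

theorem IsControl.rpow_two_div {T p : ℝ} {ω : ℝ → ℝ → ℝ} (hω : IsControl T ω) {s t : ℝ}
    (hs : 0 ≤ s) (hst : s ≤ t) (ht : t ≤ T) : ω s t ^ (2 / p) = (ω s t ^ (1 / p)) ^ 2 := by
  rw [← Real.rpow_mul_natCast (hω.nonneg hs hst ht)]
  congr 1
  push_cast
  ring

/-- The estimates defining a chart-controlled rough path, in terms of `IsControlledOn`. -/
theorem isControlledOn_rpow_iff {T p : ℝ} {k : ℕ} {ω : ℝ → ℝ → ℝ} (hω : IsControl T ω)
    {x : ℝ → Euc k} {E : Type*} [NormedAddCommGroup E] [NormedSpace ℝ E] {a b : ℝ}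
    (ha : 0 ≤ a) (hb : b ≤ T) {z : ℝ → E} {Z : ℝ → Euc k →L[ℝ] E} :
    IsControlledOn (fun s t => ω s t ^ (1 / p)) x a b z Z ↔
      ∃ C : ℝ, ∀ ⦃s t : ℝ⦄, a ≤ s → s ≤ t → t ≤ b →
        ‖z t - z s - Z s (x t - x s)‖ ≤ C * ω s t ^ (2 / p) ∧
        ‖Z t - Z s‖ ≤ C * ω s t ^ (1 / p) := by
  constructor
  · rintro ⟨C, -, h⟩
    refine ⟨C, fun s t hs hst ht => ?_⟩
    rw [hω.rpow_two_div (ha.trans hs) hst (ht.trans hb)]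
    exact h hs hst ht
  · rintro ⟨C, h⟩
    refine ⟨|C|, abs_nonneg C, fun s t hs hst ht => ?_⟩
    have h₀ := Real.rpow_nonneg (hω.nonneg (ha.trans hs) hst (ht.trans hb)) (1 / p)
    have h' := h hs hst ht
    rw [hω.rpow_two_div (ha.trans hs) hst (ht.trans hb)] at h'
    exact ⟨h'.1.trans (by gcongr; exact le_abs_self C),
      h'.2.trans (by gcongr; exact le_abs_self C)⟩

/-- Around each point mapped into the domain of a chart, a smooth map read in charts has a
locally Lipschitz derivative, and this derivative represents the differential of the map. -/
theorem exists_chart_ball_lipschitz_fderiv {d d' : ℕ}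
    {M : Type*} [TopologicalSpace M] [ChartedSpace (Euc d) M] [IsManifold (𝓡 d) (⊤ : ℕ∞) M]
    {M' : Type*} [TopologicalSpace M'] [ChartedSpace (Euc d') M']
    [IsManifold (𝓡 d') (⊤ : ℕ∞) M']
    {f : M → M'} (hf : ContMDiff (𝓡 d) (𝓡 d') (⊤ : ℕ∞) f)
    {ψ : OpenPartialHomeomorph M' (Euc d')}
    (hψ : ψ ∈ (contDiffGroupoid (⊤ : ℕ∞) (𝓡 d')).maximalAtlas M')
    {φ : OpenPartialHomeomorph M (Euc d)}
    (hφ : φ ∈ (contDiffGroupoid (⊤ : ℕ∞) (𝓡 d)).maximalAtlas M)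
    {m : M} (hm : m ∈ φ.source) (hfm : f m ∈ ψ.source) :
    ∃ (G : Euc d → Euc d') (r : ℝ) (K : NNReal), 0 < r ∧
      LipschitzOnWith K (fderiv ℝ G) (Metric.ball (φ m) r) ∧
      (∀ v ∈ Metric.ball (φ m) r, HasFDerivAt G (fderiv ℝ G v) v) ∧
      ∀ q ∈ φ.source, φ q ∈ Metric.ball (φ m) r → ψ (f q) = G (φ q) ∧
        (chartDeriv ψ (f q)).comp (mfderiv (𝓡 d) (𝓡 d') f q) =
          (fderiv ℝ G (φ q)).comp (chartDeriv φ q) := by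
  set G : Euc d → Euc d' := fun v => ψ (f (φ.symm v)) with hGdef
  set W : Set (Euc d) := φ.target ∩ φ.symm ⁻¹' (f ⁻¹' ψ.source) with hW
  have hWo : IsOpen W :=
    φ.isOpen_inter_preimage_symm (ψ.open_source.preimage hf.continuous)
  have hmW : φ m ∈ W := ⟨φ.map_source hm, by simpa [φ.left_inv hm] using hfm⟩
  have hG : ∀ v ∈ W, ContDiffAt ℝ (⊤ : ℕ∞) G v := fun v hv => by
    rw [← contMDiffAt_iff_contDiffAt]
    exact (contMDiffAt_of_mem_maximalAtlas hψ hv.2).comp v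
      ((hf (φ.symm v)).comp v (contMDiffAt_symm_of_mem_maximalAtlas hφ hv.1))
  have hne : ((⊤ : ℕ∞) : WithTop ℕ∞) ≠ 0 := by simp
  have hG' : ContDiffAt ℝ 1 (fderiv ℝ G) (φ m) :=
    (hG _ hmW).fderiv_right (WithTop.coe_le_coe.2 (le_top : (1 + 1 : ℕ∞) ≤ ⊤))
  obtain ⟨K, S, hS, hK⟩ := hG'.exists_lipschitzOnWith
  obtain ⟨r, hr, hball⟩ := Metric.mem_nhds_iff.1 (Filter.inter_mem hS (hWo.mem_nhds hmW))
  refine ⟨G, r, K, hr, hK.mono fun v hv => (hball hv).1,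
    fun v hv => ((hG v (hball hv).2).differentiableAt hne).hasFDerivAt, fun q hq hqr => ?_⟩
  have hqW : φ q ∈ W := (hball hqr).2
  have hfq : f q ∈ ψ.source := by simpa [φ.left_inv hq] using hqW.2
  refine ⟨by simp only [hGdef, φ.left_inv hq], ?_⟩
  have hφd : MDifferentiableAt (𝓡 d) (𝓡 d) φ q :=
    (contMDiffAt_of_mem_maximalAtlas hφ hq).mdifferentiableAt hne
  have hψd : MDifferentiableAt (𝓡 d') (𝓡 d') ψ (f q) :=
    (contMDiffAt_of_mem_maximalAtlas hψ hfq).mdifferentiableAt hne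
  have hGd : MDifferentiableAt (𝓡 d) (𝓡 d') G (φ q) :=
    ((hG _ hqW).differentiableAt hne).mdifferentiableAt
  have heq : ψ ∘ f =ᶠ[nhds q] G ∘ φ := by
    filter_upwards [φ.open_source.mem_nhds hq] with q' hq'
    simp only [hGdef, Function.comp_apply, φ.left_inv hq']
  have h₁ := mfderiv_comp q hψd ((hf q).mdifferentiableAt hne)
  have h₂ := mfderiv_comp q hGd hφd
  rw [mfderiv_eq_fderiv] at h₂
  exact h₁.symm.trans (heq.mfderiv_eq.trans h₂)

/-- **Push-forwards of controlled rough paths are controlled rough paths.**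
If `f : M → M̃` is smooth and `(y, y')` is a chart-controlled rough path in `M`, then
`(f ∘ y, f_* ∘ y')` is a chart-controlled rough path in `M̃`. -/
theorem pushforward_isChartCRP
    {T p : ℝ} (hT : 0 < T) (hp1 : 1 ≤ p) (hp3 : p < 3) {k : ℕ} (hk : 1 ≤ k)
    {ω : ℝ → ℝ → ℝ} (hω : IsControl T ω)
    {x : ℝ → Euc k} {XX : ℝ → ℝ → EuclideanSpace ℝ (Fin k × Fin k)}
    (hX : IsRoughPath T p ω x XX) (hgeo : IsWeakGeometric T x XX)
    {d : ℕ} {M : Type*} [TopologicalSpace M] [ChartedSpace (Euc d) M]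
    [IsManifold (𝓡 d) (⊤ : ℕ∞) M] [T2Space M] [SecondCountableTopology M]
    {d' : ℕ} {M' : Type*} [TopologicalSpace M'] [ChartedSpace (Euc d') M']
    [IsManifold (𝓡 d') (⊤ : ℕ∞) M'] [T2Space M'] [SecondCountableTopology M']
    {f : M → M'} (hf : ContMDiff (𝓡 d) (𝓡 d') (⊤ : ℕ∞) f)
    {y : ℝ → M} (hy : ContinuousOn y (Set.Icc 0 T))
    {y' : (s : ℝ) → Euc k →L[ℝ] TangentSpace (𝓡 d) (y s)}
    (hyCRP : IsChartCRP T p ω x y y') :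
    ContinuousOn (fun s => f (y s)) (Set.Icc 0 T) ∧
    IsChartCRP T p ω x (fun s => f (y s))
      (fun s => (mfderiv (𝓡 d) (𝓡 d') f (y s)).comp (y' s)) := by
  refine ⟨hf.continuous.comp_continuousOn hy, fun ψ hψ a b ha hab hb hsrc => ?_⟩
  have hρ := (hX.isIncrementBound (zero_le_one.trans hp1) hω).subinterval ha hb
  have hyI : Continuous fun s : Set.Icc a b => y s :=
    (hy.mono (Set.Icc_subset_Icc ha hb)).domRestrict
  refine (isControlledOn_rpow_iff hω ha hb (z := fun s => ψ (f (y s)))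
    (Z := fun s => (chartDeriv ψ (f (y s))).comp
      ((mfderiv (𝓡 d) (𝓡 d') f (y s)).comp (y' s)))).1 ?_
  refine isControlledOn_of_locally hρ hab fun s₀ => ?_
  set φ := chartAt (Euc d) (y s₀) with hφdef
  have hφ : φ ∈ (contDiffGroupoid (⊤ : ℕ∞) (𝓡 d)).maximalAtlas M :=
    IsManifold.chart_mem_maximalAtlas (y s₀)
  have hs₀ : y s₀ ∈ φ.source := mem_chart_source _ _
  obtain ⟨G, r, K, hr, hK, hG, hchart⟩ :=
    exists_chart_ball_lipschitz_fderiv hf hψ hφ hs₀ (hsrc s₀ s₀.2)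
  refine ⟨(fun s : Set.Icc a b => y s) ⁻¹' (φ.source ∩ φ ⁻¹' Metric.ball (φ (y s₀)) r),
    (φ.isOpen_inter_preimage Metric.isOpen_ball).preimage hyI,
    ⟨hs₀, Metric.mem_ball_self hr⟩, fun u v huv hsub => ?_⟩
  have hmem : ∀ s ∈ Set.Icc (u : ℝ) v,
      y s ∈ φ.source ∧ φ (y s) ∈ Metric.ball (φ (y s₀)) r := fun s hs =>
    hsub (show (⟨s, u.2.1.trans hs.1, hs.2.trans v.2.2⟩ : Set.Icc a b) ∈ Set.Icc u v from hs)
  have hz : IsControlledOn (fun s t => ω s t ^ (1 / p)) x u v (fun s => φ (y s))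
      (fun s => (chartDeriv φ (y s)).comp (y' s)) :=
    (isControlledOn_rpow_iff hω (ha.trans u.2.1) (v.2.2.trans hb)).2
      (hyCRP φ hφ u v (ha.trans u.2.1) huv (v.2.2.trans hb) fun s hs => (hmem s hs).1)
  refine (hz.comp_of_lipschitz_deriv (hρ.subinterval u.2.1 v.2.2) huv
    (convex_ball (φ (y s₀)) r) (fun s hs => (hmem s hs).2) hG hK).congr
    (fun s hs => (hchart _ (hmem s hs).1 (hmem s hs).2).1) fun s hs => ?_
  have := (hchart _ (hmem s hs).1 (hmem s hs).2).2
  exact congrArg (fun A : TangentSpace (𝓡 d) (y s) →L[ℝ] Euc d' => A.comp (y' s)) this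
end
end
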